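/- arXiv:2305.02098 — 2 statements merged into one kernel-verified Lean document; each statement's English description precedes it below -/
import Mathlib

section
/- Let 0 ≤ k < ∞ and set n = k + 3/2 (with the convention that ‖f‖_{1+1/k} denotes the L^∞ norm when k = 0). There exists a constant C > 0, depending only on k, such that for every measurable function f : ℝ³ × ℝ³ → [0,∞), the induced spatial density satisfies ‖ρ_f‖_{L^{1+1/n}(ℝ³)} ≤ C · ‖f‖_{L^{1+1/k}(ℝ⁶)}^{(2+2k)/(5+2k)} · ( ∬ |p|² f(x,p) dp dx )^{3/(5+2k)}. -/
/-!
The estimate is the classical interpolation between an `L^q` bound, `q = 1 + 1/k`, and the second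
momentum moment.

Fix `x`, write `A` for the `L^q` norm of `f(x, ·)` and `B` for its second moment. Splitting the
momentum integral at radius `R` and using Hölder inside the ball (`holder_ball`; for `k = 0` simply
the sup bound) and Chebyshev outside gives `ρ_f(x) ≤ A |B_R|^{1/(1+k)} + R⁻² B` (`split_bound`).
At `R = (B/A)^{(1+k)/(5+2k)}` both terms are multiples of `A^{(2+2k)/(5+2k)} B^{3/(5+2k)}`
(`pointwise_bound`). Raising this to the power `1 + 1/n = (5+2k)/(3+2k)` turns the right-hand
side into `(A^q)^{2k/(3+2k)} B^{3/(3+2k)}`, whose exponents sum to one, so Hölder in `x` followed by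
Tonelli finishes the proof (`integrate_bound`).

All integrals are taken in `ℝ≥0∞`, so no finiteness has to be assumed; where `f(x, ·)` is not
integrable the Bochner integral defining `ρ_f(x)` is zero, and `‖ρ_f(x)‖ₑ ≤ ∫ ‖f(x, p)‖ₑ dp` is
still true.
-/

open MeasureTheory Set Filter Topology
open scoped ENNReal RealInnerProductSpace

noncomputable section

/-- Position/momentum space `ℝ³`. -/
abbrev V3 : Type := EuclideanSpace ℝ (Fin 3)

/-- The spatial density `ρ_f(x) = ∫ f(x,p) dp` induced by a phase-space density. -/
def spatialDensity (f : V3 × V3 → ℝ) (x : V3) : ℝ := ∫ p : V3, f (x, p)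

/-- The exponent `1 + 1/k`, with the convention that it is `∞` for `k = 0`. -/
def expo (k : ℝ) : ℝ≥0∞ := if k = 0 then ⊤ else ENNReal.ofReal (1 + 1 / k)

/-- Chebyshev's inequality at a point: outside the ball of radius `R`, `1 ≤ R⁻² |p|²`. -/
lemma enorm_mom (p : V3) (g : ℝ≥0∞) {R : ℝ} (hR : 0 < R) (hp : p ∉ Metric.ball (0 : V3) R) :
    g ≤ (ENNReal.ofReal R ^ (2 : ℝ))⁻¹ * (‖p‖ₑ ^ 2 * g) := by
  have h1 : R ≤ ‖p‖ := by simpa using hp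
  have h2 : ENNReal.ofReal R ^ (2 : ℝ) ≤ ‖p‖ₑ ^ 2 := by
    rw [← ofReal_norm, ← ENNReal.rpow_natCast]
    exact ENNReal.rpow_le_rpow (ENNReal.ofReal_le_ofReal h1) (by norm_num)
  have h0 : ENNReal.ofReal R ^ (2 : ℝ) ≠ 0 := by simp [hR]
  have ht : ENNReal.ofReal R ^ (2 : ℝ) ≠ ⊤ := by simp
  calc g = (ENNReal.ofReal R ^ (2 : ℝ))⁻¹ * (ENNReal.ofReal R ^ (2 : ℝ) * g) := by
        rw [← mul_assoc, ENNReal.inv_mul_cancel h0 ht, one_mul]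
    _ ≤ _ := by gcongr

/-- Splitting the momentum integral at radius `R`: the inner part is controlled by hypothesis,
the outer part by Chebyshev's inequality for the second moment. -/
lemma split_bound (k : ℝ) (hk : 0 ≤ k) (g : V3 → ℝ≥0∞) (A : ℝ≥0∞)
    (hA : ∀ R : ℝ, 0 < R → ∫⁻ p in Metric.ball (0 : V3) R, g p
      ≤ A * volume (Metric.ball (0 : V3) R) ^ (1 / (1 + k))) {R : ℝ} (hR : 0 < R) :
    ∫⁻ p, g p ≤ A * (ENNReal.ofReal R ^ (3 / (1 + k)) *
        volume (Metric.ball (0 : V3) 1) ^ (1 / (1 + k)))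
      + (ENNReal.ofReal R ^ (2 : ℝ))⁻¹ * ∫⁻ p, ‖p‖ₑ ^ 2 * g p := by
  rw [← lintegral_add_compl g (measurableSet_ball (x := (0 : V3)) (ε := R))]
  refine add_le_add ?_ ?_
  · refine (hA R hR).trans_eq ?_
    have h3 : volume (Metric.ball (0 : V3) R)
        = ENNReal.ofReal R ^ (3 : ℝ) * volume (Metric.ball (0 : V3) 1) := by
      rw [Measure.addHaar_ball volume (0 : V3) hR.le, finrank_euclideanSpace_fin,
        ENNReal.ofReal_pow hR.le, ← ENNReal.rpow_natCast]
      norm_num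
    rw [h3, ENNReal.mul_rpow_of_nonneg _ _ (by positivity), ← ENNReal.rpow_mul]
    congr 4
    ring
  · calc ∫⁻ p in (Metric.ball (0 : V3) R)ᶜ, g p
        ≤ ∫⁻ p in (Metric.ball (0 : V3) R)ᶜ,
            (ENNReal.ofReal R ^ (2 : ℝ))⁻¹ * (‖p‖ₑ ^ 2 * g p) :=
          setLIntegral_mono' measurableSet_ball.compl fun p hp => enorm_mom p (g p) hR hp
      _ ≤ ∫⁻ p, (ENNReal.ofReal R ^ (2 : ℝ))⁻¹ * (‖p‖ₑ ^ 2 * g p) := setLIntegral_le_lintegral _ _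
      _ = _ := lintegral_const_mul' _ _ (by simp [hR])

/-- The pointwise interpolation estimate. -/
lemma pointwise_bound (k : ℝ) (hk : 0 ≤ k) (g : V3 → ℝ≥0∞) (hg : Measurable g) (A : ℝ≥0∞)
    (hA : ∀ R : ℝ, 0 < R → ∫⁻ p in Metric.ball (0 : V3) R, g p
      ≤ A * volume (Metric.ball (0 : V3) R) ^ (1 / (1 + k))) :
    ∫⁻ p, g p ≤ (volume (Metric.ball (0 : V3) 1) ^ (1 / (1 + k)) + 1) *
      (A ^ ((2 + 2 * k) / (5 + 2 * k)) * (∫⁻ p, ‖p‖ₑ ^ 2 * g p) ^ (3 / (5 + 2 * k))) := by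
  have hs := fun R hR => split_bound k hk g A hA (R := R) hR
  set B := ∫⁻ p, ‖p‖ₑ ^ 2 * g p with hB
  set V := volume (Metric.ball (0 : V3) 1) ^ (1 / (1 + k)) with hV
  have ha : 0 < (2 + 2 * k) / (5 + 2 * k) := by positivity
  have hb : 0 < 3 / (5 + 2 * k) := by positivity
  have hzero : ∀ (h : g =ᵐ[volume] 0), ∫⁻ p, g p = 0 := fun h => by
    rw [lintegral_congr_ae h]; simp
  by_cases hA0 : A = 0
  · rw [hzero]
    · simp
    · have h1 : ∀ n : ℕ, ∀ᵐ p, p ∈ Metric.ball (0 : V3) (n + 1) → g p = 0 := fun n => by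
        have h2 := hA (n + 1) (by positivity)
        rw [hA0, zero_mul, nonpos_iff_eq_zero, lintegral_eq_zero_iff hg] at h2
        exact (ae_restrict_iff' measurableSet_ball).1 h2
      filter_upwards [ae_all_iff.2 h1] with p hp
      obtain ⟨n, hn⟩ := exists_nat_gt ‖p‖
      exact hp n (by simp; linarith)
  by_cases hB0 : B = 0
  · rw [hzero]
    · simp
    · have h1 := (lintegral_eq_zero_iff (by fun_prop)).1 hB0
      have h2 : ∀ᵐ p : V3, p ≠ 0 := by simp [ae_iff]
      filter_upwards [h1, h2] with p hp hp0
      simpa [hp0] using hp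
  by_cases hAt : A = ⊤
  · rw [hAt, ENNReal.top_rpow_of_pos ha, ENNReal.top_mul, ENNReal.mul_top]
    · exact le_top
    · simp
    · simp [hB0, hb, hb.le]
  by_cases hBt : B = ⊤
  · rw [hBt, ENNReal.top_rpow_of_pos hb, ENNReal.mul_top, ENNReal.mul_top]
    · exact le_top
    · simp
    · simp [hA0, ha, ha.le]
  -- The radius balancing the inner and the outer contribution.
  have hapos : 0 < A.toReal := ENNReal.toReal_pos hA0 hAt
  have hbpos : 0 < B.toReal := ENNReal.toReal_pos hB0 hBt
  have hR : 0 < (B.toReal / A.toReal) ^ ((1 + k) / (5 + 2 * k)) := by positivity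
  refine (hs _ hR).trans_eq ?_
  rw [← ENNReal.ofReal_toReal hAt, ← ENNReal.ofReal_toReal hBt]
  rw [ENNReal.toReal_ofReal hapos.le, ENNReal.toReal_ofReal hbpos.le]
  generalize A.toReal = a at *
  generalize B.toReal = b at *
  have e1 : a * (((b / a) ^ ((1 + k) / (5 + 2 * k))) ^ (3 / (1 + k)))
      = a ^ ((2 + 2 * k) / (5 + 2 * k)) * b ^ (3 / (5 + 2 * k)) := by
    rw [← Real.rpow_mul (by positivity)]
    have h1 : (1 + k) / (5 + 2 * k) * (3 / (1 + k)) = 3 / (5 + 2 * k) := by field_simp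
    have h2 : (2 + 2 * k) / (5 + 2 * k) = 1 - 3 / (5 + 2 * k) := by field_simp; ring
    rw [h1, h2, Real.rpow_sub hapos, Real.div_rpow hbpos.le hapos.le, Real.rpow_one]
    ring
  have e2 : (((b / a) ^ ((1 + k) / (5 + 2 * k))) ^ (2 : ℝ))⁻¹ * b
      = a ^ ((2 + 2 * k) / (5 + 2 * k)) * b ^ (3 / (5 + 2 * k)) := by
    rw [← Real.rpow_mul (by positivity)]
    have h1 : (1 + k) / (5 + 2 * k) * 2 = (2 + 2 * k) / (5 + 2 * k) := by ring
    have h2 : 3 / (5 + 2 * k) = 1 - (2 + 2 * k) / (5 + 2 * k) := by field_simp; ring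
    rw [h1, h2, Real.rpow_sub hbpos, Real.div_rpow hbpos.le hapos.le, Real.rpow_one, inv_div]
    ring
  have e1' := congrArg ENNReal.ofReal e1
  have e2' := congrArg ENNReal.ofReal e2
  rw [ENNReal.ofReal_mul hapos.le, ENNReal.ofReal_mul (by positivity),
    ← ENNReal.ofReal_rpow_of_pos hR, ← ENNReal.ofReal_rpow_of_pos hapos,
    ← ENNReal.ofReal_rpow_of_pos hbpos] at e1'
  rw [ENNReal.ofReal_mul (by positivity), ENNReal.ofReal_mul (by positivity),
    ENNReal.ofReal_inv_of_pos (by positivity),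
    ← ENNReal.ofReal_rpow_of_pos hR, ← ENNReal.ofReal_rpow_of_pos hapos,
    ← ENNReal.ofReal_rpow_of_pos hbpos] at e2'
  rw [e2', ← mul_assoc, e1', add_mul, one_mul, mul_comm]

/-- Integrating a pointwise interpolation bound in `x` by Hölder's inequality with the conjugate
weights `2k/(3+2k)` and `3/(3+2k)`. The extra constant `K` carries the sup norm of `f` in the case
`k = 0`, where the weight of `G` vanishes. -/
lemma integrate_bound (k : ℝ) (hk : 0 ≤ k) (r : V3 → ℝ) (K : ℝ≥0∞) (G H : V3 → ℝ≥0∞)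
    (hG : Measurable G) (hH : Measurable H)
    (h : ∀ᵐ x, ‖r x‖ₑ ≤ K * (G x ^ (2 * k / (5 + 2 * k)) * H x ^ (3 / (5 + 2 * k)))) :
    eLpNorm r (ENNReal.ofReal (1 + 1 / (k + 3 / 2))) volume ≤
      K * ((∫⁻ x, G x) ^ (2 * k / (5 + 2 * k)) * (∫⁻ x, H x) ^ (3 / (5 + 2 * k))) := by
  have hm : 1 + 1 / (k + 3 / 2) = (5 + 2 * k) / (3 + 2 * k) := by field_simp; ring
  rw [hm]
  set m := (5 + 2 * k) / (3 + 2 * k) with hmdef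
  have hmp : 0 < m := by positivity
  have x1 : 2 * k / (5 + 2 * k) * m = 2 * k / (3 + 2 * k) := by rw [hmdef]; field_simp
  have x2 : 3 / (5 + 2 * k) * m = 3 / (3 + 2 * k) := by rw [hmdef]; field_simp
  rw [eLpNorm_eq_lintegral_rpow_enorm_toReal (by simpa using hmp) (by simp),
    ENNReal.toReal_ofReal hmp.le, one_div, ENNReal.rpow_inv_le_iff hmp]
  calc ∫⁻ x, ‖r x‖ₑ ^ m
      ≤ ∫⁻ x, K ^ m * (G x ^ (2 * k / (3 + 2 * k)) * H x ^ (3 / (3 + 2 * k))) := by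
        refine lintegral_mono_ae ?_
        filter_upwards [h] with x hx
        refine (ENNReal.rpow_le_rpow hx hmp.le).trans_eq ?_
        rw [ENNReal.mul_rpow_of_nonneg _ _ hmp.le, ENNReal.mul_rpow_of_nonneg _ _ hmp.le,
          ← ENNReal.rpow_mul, ← ENNReal.rpow_mul, x1, x2]
    _ = K ^ m * ∫⁻ x, (G x ^ (2 * k / (3 + 2 * k)) * H x ^ (3 / (3 + 2 * k))) :=
        lintegral_const_mul _ (by fun_prop)
    _ ≤ K ^ m * ((∫⁻ x, G x) ^ (2 * k / (3 + 2 * k)) * (∫⁻ x, H x) ^ (3 / (3 + 2 * k))) := by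
        gcongr
        exact ENNReal.lintegral_mul_norm_pow_le hG.aemeasurable hH.aemeasurable
          (by positivity) (by positivity) (by field_simp; ring)
    _ = _ := by
        rw [ENNReal.mul_rpow_of_nonneg _ _ hmp.le, ENNReal.mul_rpow_of_nonneg _ _ hmp.le,
          ← ENNReal.rpow_mul, ← ENNReal.rpow_mul, x1, x2]

/-- For `k > 0`, Hölder's inequality on a ball, with exponent `1 + 1/k` conjugate to `1 + k`. -/
lemma holder_ball (k : ℝ) (hk : 0 < k) (g : V3 → ℝ≥0∞) (hg : Measurable g) (s : Set V3) :
    ∫⁻ p in s, g p ≤ (∫⁻ p, g p ^ (1 + 1 / k)) ^ (1 / (1 + 1 / k)) * volume s ^ (1 / (1 + k)) := by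
  have hc : (1 + 1 / k).HolderConjugate (1 + k) := by
    rw [Real.holderConjugate_iff]
    refine ⟨by simpa using hk, ?_⟩
    field_simp
    ring
  have h := ENNReal.lintegral_mul_le_Lp_mul_Lq (volume.restrict s) hc hg.aemeasurable
    (aemeasurable_const (b := (1 : ℝ≥0∞)))
  simp only [Pi.mul_apply, mul_one, ENNReal.one_rpow, lintegral_const, one_mul,
    Measure.restrict_apply_univ] at h
  refine h.trans ?_
  gcongr
  exact Measure.restrict_le_self

/-- **Interpolation estimate for the spatial density (Vlasov–Poisson case).**
Let `0 ≤ k < ∞` and `n = k + 3/2`.  There is a constant `C > 0` depending only on `k`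
such that for every nonnegative measurable phase-space density `f`,
`‖ρ_f‖_{1+1/n} ≤ C ‖f‖_{1+1/k}^{(2+2k)/(5+2k)} (∬ |p|² f dp dx)^{3/(5+2k)}`. -/
theorem stmt_0 (k : ℝ) (hk : 0 ≤ k) :
    ∃ C : ℝ, 0 < C ∧
      ∀ f : V3 × V3 → ℝ, Measurable f → (∀ z, 0 ≤ f z) →
        eLpNorm (spatialDensity f) (ENNReal.ofReal (1 + 1 / (k + 3 / 2))) volume
          ≤ ENNReal.ofReal C
            * eLpNorm f (expo k) volume ^ ((2 + 2 * k) / (5 + 2 * k))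
            * (∫⁻ z : V3 × V3, ENNReal.ofReal (‖z.2‖ ^ 2 * f z)) ^ (3 / (5 + 2 * k)) := by
  set c : ℝ≥0∞ := volume (Metric.ball (0 : V3) 1) ^ (1 / (1 + k)) + 1 with hc
  have hct : c ≠ ⊤ := by
    refine ENNReal.add_ne_top.2 ⟨ENNReal.rpow_ne_top_of_nonneg (by positivity) ?_, by simp⟩
    exact measure_ball_lt_top.ne
  have hc0 : c ≠ 0 := by simp [hc]
  refine ⟨c.toReal, ENNReal.toReal_pos hc0 hct, fun f hf hf0 => ?_⟩
  rw [ENNReal.ofReal_toReal hct]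
  have hfe : Measurable fun z : V3 × V3 => ‖f z‖ₑ := by fun_prop
  have hmom : Measurable fun z : V3 × V3 => ‖z.2‖ₑ ^ 2 * ‖f z‖ₑ := by fun_prop
  have hkin : ∫⁻ z : V3 × V3, ENNReal.ofReal (‖z.2‖ ^ 2 * f z)
      = ∫⁻ x : V3, ∫⁻ p : V3, ‖p‖ₑ ^ 2 * ‖f (x, p)‖ₑ := by
    rw [Measure.volume_eq_prod, ← lintegral_prod (fun z : V3 × V3 => ‖z.2‖ₑ ^ 2 * ‖f z‖ₑ)
      hmom.aemeasurable]
    refine lintegral_congr fun z => ?_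
    rw [ENNReal.ofReal_mul (by positivity), ENNReal.ofReal_pow (norm_nonneg _),
      ofReal_norm, Real.enorm_eq_ofReal (hf0 z)]
  have hdens : ∀ x, ‖spatialDensity f x‖ₑ ≤ ∫⁻ p, ‖f (x, p)‖ₑ := fun x =>
    enorm_integral_le_lintegral_enorm _
  have hH : Measurable fun x : V3 => ∫⁻ p : V3, ‖p‖ₑ ^ 2 * ‖f (x, p)‖ₑ :=
    hmom.lintegral_prod_right'
  rw [hkin]
  rcases hk.eq_or_lt with rfl | hkp
  · set M := eLpNorm f (expo 0) volume with hM
    have hMf : ∀ᵐ z : V3 × V3, ‖f z‖ₑ ≤ M := by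
      have : M = eLpNormEssSup f volume := by simp [hM, expo]
      rw [this]
      exact enorm_ae_le_eLpNormEssSup f volume
    rw [Measure.volume_eq_prod] at hMf
    have hae := Measure.ae_ae_of_ae_prod hMf
    refine (integrate_bound 0 le_rfl _ (c * M ^ ((2 + 2 * (0 : ℝ)) / (5 + 2 * 0))) 0 _
      measurable_zero hH ?_).trans_eq (by simp)
    filter_upwards [hae] with x hx
    refine (hdens x).trans ((pointwise_bound 0 le_rfl _ (by fun_prop) M ?_).trans_eq ?_)
    · intro R _
      calc ∫⁻ p in Metric.ball (0 : V3) R, ‖f (x, p)‖ₑ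
          ≤ ∫⁻ p in Metric.ball (0 : V3) R, M := lintegral_mono_ae (ae_restrict_of_ae hx)
        _ = _ := by simp
    · simp [hc, mul_assoc]
  · have hq : 0 < 1 + 1 / k := by positivity
    have hx1 : 1 / (1 + 1 / k) * ((2 + 2 * k) / (5 + 2 * k)) = 2 * k / (5 + 2 * k) := by
      field_simp
      ring
    have hnorm : eLpNorm f (expo k) volume ^ ((2 + 2 * k) / (5 + 2 * k))
        = (∫⁻ x : V3, ∫⁻ p : V3, ‖f (x, p)‖ₑ ^ (1 + 1 / k)) ^ (2 * k / (5 + 2 * k)) := by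
      rw [expo, if_neg hkp.ne', eLpNorm_eq_lintegral_rpow_enorm_toReal (by simpa using hq)
        (by simp), ENNReal.toReal_ofReal hq.le, ← ENNReal.rpow_mul, hx1,
        Measure.volume_eq_prod, lintegral_prod _ (by fun_prop)]
    rw [hnorm, mul_assoc]
    refine integrate_bound k hk _ c _ _ (Measurable.lintegral_prod_right' (hfe.pow_const _)) hH
      (Eventually.of_forall fun x => (hdens x).trans ?_)
    refine (pointwise_bound k hk _ (by fun_prop) _
      fun R _ => holder_ball k hkp _ (by fun_prop) _).trans_eq ?_
    rw [← ENNReal.rpow_mul, hx1]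
end
end

section
/- Let 0 ≤ k ≤ 7/2 (with the convention that ‖f‖_{1+1/k} denotes the L^∞ norm when k = 0). There exists a constant C > 0, depending only on k, such that for every measurable function f : ℝ³ × ℝ³ → [0,∞), (1/2) ∬_{ℝ³×ℝ³} ρ_f(x) ρ_f(y) |x−y|^{−1} dx dy ≤ C · ‖f‖_{L^1(ℝ⁶)}^{(7−2k)/6} · ‖f‖_{L^{1+1/k}(ℝ⁶)}^{(k+1)/3} · E_kin(f)^{1/2}, where E_kin(f) = (1/2) ∬ |p|² f(x,p) dp dx. (The left-hand side equals −E_pot(f), the negative of the Newtonian potential energy.) -/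
/-!
With `ρ(x) = ∫ f(x,p) dp`, the estimate combines two facts, each proved by splitting an integral at
a radius `R` and optimizing `R` (`optimize_radius`).

* `newton_hls`: `∬ ρ(x) ρ(y) |x-y|⁻¹ ≤ C (∫ ρ^{6/5})^{5/3}`. By symmetry only the pairs with
  `ρ(y) ≤ ρ(x)` matter. For fixed `x`, with `b = ρ(x)`, the inner integral of `ρ(y) |x-y|⁻¹` is at
  most a constant times `b R² + ‖ρ‖_{6/5} R^{-1/2}`, hence, optimizing, times
  `b^{1/5} ‖ρ‖_{6/5}^{4/5}` (`sublevel_potential`); integrating `ρ · ρ^{1/5} = ρ^{6/5}` in `x`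
  gives the claim.
* `density_L65`: `∫ ρ^{6/5} ≤ C ‖f‖₁^{(7-2k)/10} ‖f‖_{1+1/k}^{(k+1)/5} E^{3/10}` where
  `E = ∬ |p|² f`. Splitting the momentum integral at `|p| = R` bounds `ρ(x)` by
  `‖f(x,·)‖_{1+1/k}` and `∫ |p|² f(x,p) dp` (`density_interpolation`), and Hölder's inequality in
  `x` concludes. The condition `k ≤ 7/2` is exactly nonnegativity of the first exponent.

Raising the second bound to the power `5/3` produces the stated exponents. All integrals are lower
Lebesgue integrals in `ℝ≥0∞`, so no finiteness assumption enters.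
-/

open MeasureTheory Set Filter Topology
open scoped ENNReal RealInnerProductSpace

noncomputable section

/-! ### The Newtonian kernel and the Hardy–Littlewood–Sobolev inequality -/

/-- Optimization over the radius at which an integral is split: balancing `A R^α` against
`B R^{-β}` at `R = (B/A)^{1/(α+β)}`. The hypotheses `hA`, `hB` cover the degenerate products `0 * ∞`
in the conclusion, which vanish in `ℝ≥0∞`. -/
lemma optimize_radius {X A B : ℝ≥0∞} {α β : ℝ} (hα : 0 < α) (hβ : 0 < β)
    (hA : A = 0 → X = 0) (hB : B = 0 → X = 0)
    (h : ∀ R : ℝ, 0 < R → X ≤ A * ENNReal.ofReal (R ^ α) + B * ENNReal.ofReal (R ^ (-β))) :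
    X ≤ 2 * (A ^ (β / (α + β)) * B ^ (α / (α + β))) := by
  have hs : 0 < α + β := by positivity
  rcases eq_or_ne A 0 with hA0 | hA0
  · simp [hA hA0]
  rcases eq_or_ne B 0 with hB0 | hB0
  · simp [hB hB0]
  have hu : 0 < β / (α + β) := by positivity
  have hv : 0 < α / (α + β) := by positivity
  rcases eq_or_ne A ⊤ with hAt | hAt
  · rw [hAt, ENNReal.top_rpow_of_pos hu, ENNReal.top_mul, ENNReal.mul_top] <;> simp [hB0, hv.le]
  rcases eq_or_ne B ⊤ with hBt | hBt
  · rw [hBt, ENNReal.top_rpow_of_pos hv, ENNReal.mul_top, ENNReal.mul_top] <;> simp [hA0, hu.le]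
  obtain ⟨a, rfl⟩ : ∃ a : ℝ, A = ENNReal.ofReal a := ⟨A.toReal, (ENNReal.ofReal_toReal hAt).symm⟩
  obtain ⟨b, rfl⟩ : ∃ b : ℝ, B = ENNReal.ofReal b := ⟨B.toReal, (ENNReal.ofReal_toReal hBt).symm⟩
  have ha : 0 < a := by simpa using hA0
  have hb : 0 < b := by simpa using hB0
  -- both terms take the same value at the balancing radius `R = (b / a) ^ (1 / (α + β))`
  have e1 : a * ((b / a) ^ (1 / (α + β))) ^ α = a ^ (β / (α + β)) * b ^ (α / (α + β)) := by
    rw [← Real.rpow_mul (by positivity), Real.div_rpow hb.le ha.le]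
    have : β / (α + β) = 1 - 1 / (α + β) * α := by field_simp; ring
    rw [this, Real.rpow_sub ha, Real.rpow_one]
    have : α / (α + β) = 1 / (α + β) * α := by field_simp
    rw [this]; ring
  have e2 : b * ((b / a) ^ (1 / (α + β))) ^ (-β) = a ^ (β / (α + β)) * b ^ (α / (α + β)) := by
    rw [← Real.rpow_mul (by positivity), Real.div_rpow hb.le ha.le]
    have : α / (α + β) = 1 + 1 / (α + β) * (-β) := by field_simp; ring
    rw [this, Real.rpow_add hb, Real.rpow_one]
    have : β / (α + β) = -(1 / (α + β) * (-β)) := by field_simp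
    rw [this, Real.rpow_neg ha.le]; ring
  refine (h ((b / a) ^ (1 / (α + β))) (by positivity)).trans (le_of_eq ?_)
  rw [← ENNReal.ofReal_mul ha.le, ← ENNReal.ofReal_mul hb.le, e1, e2,
    ENNReal.ofReal_mul (by positivity), ENNReal.ofReal_rpow_of_pos ha, ENNReal.ofReal_rpow_of_pos hb, two_mul]

lemma lintegral_dilation (φ : V3 → ℝ≥0∞) {R : ℝ} (hR : 0 < R) :
    ∫⁻ z, φ z = ENNReal.ofReal (R ^ 3) * ∫⁻ z, φ (R • z) := by
  have h1 := (Homeomorph.smulOfNeZero R hR.ne').toMeasurableEquiv.measurableEmbedding.lintegral_map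
    (μ := (volume : Measure V3)) φ
  have h2 := Measure.map_addHaar_smul (volume : Measure V3) hR.ne'
  have h3 : (⇑(Homeomorph.smulOfNeZero R hR.ne').toMeasurableEquiv : V3 → V3) = (R • ·) := rfl
  rw [h3, h2, lintegral_smul_measure] at h1
  rw [← h1, smul_eq_mul, ← mul_assoc, ← ENNReal.ofReal_mul (by positivity)]
  simp only [finrank_euclideanSpace, Fintype.card_fin]
  rw [abs_of_pos (by positivity), mul_inv_cancel₀ (by positivity)]
  simp

/-- `∫_{|z|<R} |z|⁻¹ dz = c R²` with `c < ∞`. -/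
lemma near_kernel : ∃ c : ℝ≥0∞, c ≠ ⊤ ∧ ∀ R : ℝ, 0 < R →
    ∫⁻ z : V3, (if ‖z‖ < R then ENNReal.ofReal ‖z‖⁻¹ else 0) = c * ENNReal.ofReal (R ^ (2 : ℝ)) := by
  refine ⟨∫⁻ z : V3, (if ‖z‖ < 1 then ENNReal.ofReal ‖z‖⁻¹ else 0), ?_, fun R hR => ?_⟩
  · have h : IntegrableOn (fun x : V3 => ‖x‖⁻¹) (Metric.ball 0 1) volume := by
      rw [integrableOn_fun_norm_addHaar volume (f := fun y : ℝ => y⁻¹)]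
      have : IntegrableOn (fun y : ℝ => y) (Ioo 0 1) :=
        (continuous_id.integrableOn_Icc).mono_set Ioo_subset_Icc_self
      refine this.congr_fun (fun y hy => ?_) measurableSet_Ioo
      have := hy.1.ne'
      simp [finrank_euclideanSpace]
      field_simp
    have h' := h.lintegral_lt_top.ne
    rw [← lintegral_indicator measurableSet_ball] at h'
    convert h' using 3 with z
    simp [indicator]
  · rw [lintegral_dilation _ hR, mul_comm]
    have : ∀ z : V3, (if ‖R • z‖ < R then ENNReal.ofReal ‖R • z‖⁻¹ else 0)
        = ENNReal.ofReal R⁻¹ * (if ‖z‖ < 1 then ENNReal.ofReal ‖z‖⁻¹ else 0) := by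
      intro z
      rw [norm_smul, Real.norm_of_nonneg hR.le]
      have : R * ‖z‖ < R ↔ ‖z‖ < 1 := mul_lt_iff_lt_one_right hR
      simp only [this]
      split_ifs
      · rw [← ENNReal.ofReal_mul (by positivity), mul_inv]
      · simp
    simp_rw [this]
    rw [lintegral_const_mul' _ _ ENNReal.ofReal_ne_top, mul_comm (ENNReal.ofReal R⁻¹), mul_assoc,
      ← ENNReal.ofReal_mul (by positivity)]
    congr 2
    norm_cast
    field_simp

/-- `∫_{|z|≥R} |z|⁻⁶ dz = c R⁻³` with `c < ∞`; this is the sixth power of the `L⁶` norm of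
the tail of the Newtonian kernel. -/
lemma far_kernel : ∃ c : ℝ≥0∞, c ≠ ⊤ ∧ ∀ R : ℝ, 0 < R →
    ∫⁻ z : V3, (if ‖z‖ < R then 0 else ENNReal.ofReal ‖z‖⁻¹) ^ (6 : ℝ)
      = c * ENNReal.ofReal (R ^ (-3 : ℝ)) := by
  refine ⟨∫⁻ z : V3, (if ‖z‖ < 1 then 0 else ENNReal.ofReal ‖z‖⁻¹) ^ (6 : ℝ), ?_, fun R hR => ?_⟩
  · have h := finite_integral_one_add_norm (E := V3) (r := 6) (μ := volume)
      (by simp [finrank_euclideanSpace]; norm_num)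
    have h2 : ∫⁻ z : V3, ENNReal.ofReal (2 ^ (6 : ℝ)) * ENNReal.ofReal ((1 + ‖z‖) ^ (-6 : ℝ)) ≠ ⊤ := by
      rw [lintegral_const_mul' _ _ ENNReal.ofReal_ne_top]
      exact ENNReal.mul_ne_top ENNReal.ofReal_ne_top h.ne
    refine ne_top_of_le_ne_top h2 (lintegral_mono fun z => ?_)
    dsimp only
    split_ifs with hz
    · simp
    · push Not at hz
      rw [ENNReal.ofReal_rpow_of_nonneg (by positivity) (by norm_num),
        ← ENNReal.ofReal_mul (by positivity)]
      apply ENNReal.ofReal_le_ofReal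
      rw [Real.rpow_neg (by positivity), ← Real.inv_rpow (by positivity),
        ← Real.mul_rpow (by positivity) (by positivity)]
      apply Real.rpow_le_rpow (by positivity) _ (by norm_num)
      rw [inv_le_iff_one_le_mul₀ (by positivity), mul_right_comm, ← div_eq_mul_inv, le_div_iff₀ (by positivity)]
      linarith
  · rw [lintegral_dilation _ hR, mul_comm]
    have : ∀ z : V3, (if ‖R • z‖ < R then 0 else ENNReal.ofReal ‖R • z‖⁻¹) ^ (6 : ℝ)
        = ENNReal.ofReal (R ^ (-6 : ℝ)) * (if ‖z‖ < 1 then 0 else ENNReal.ofReal ‖z‖⁻¹) ^ (6 : ℝ) := by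
      intro z
      rw [norm_smul, Real.norm_of_nonneg hR.le]
      have : R * ‖z‖ < R ↔ ‖z‖ < 1 := mul_lt_iff_lt_one_right hR
      simp only [this]
      split_ifs
      · simp
      · rw [mul_inv, ENNReal.ofReal_mul (by positivity), ENNReal.mul_rpow_of_nonneg _ _ (by norm_num),
          ENNReal.ofReal_rpow_of_nonneg (by positivity) (by norm_num), Real.inv_rpow hR.le,
          Real.rpow_neg hR.le]
    simp_rw [this]
    rw [lintegral_const_mul' _ _ ENNReal.ofReal_ne_top, mul_comm (ENNReal.ofReal (R ^ (-6 : ℝ))),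
      mul_assoc, ← ENNReal.ofReal_mul (by positivity)]
    congr 2
    rw [← Real.rpow_natCast R 3, ← Real.rpow_add hR]
    norm_num

/-- The potential generated at any point by the part of `ρ` lying below the level `b` is at most
`c b^{1/5} ‖ρ‖_{6/5}^{4/5}`: the bound `ρ ≤ b` is used within distance `R`, Hölder's inequality with
exponents `6/5` and `6` beyond it. -/
lemma sublevel_potential : ∃ c : ℝ≥0∞, c ≠ ⊤ ∧ ∀ ρ : V3 → ℝ≥0∞, Measurable ρ → ∀ (b : ℝ≥0∞) (x : V3),
    ∫⁻ y, (if ρ y ≤ b then ρ y * ENNReal.ofReal ‖x - y‖⁻¹ else 0)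
      ≤ c * (b ^ (1 / 5 : ℝ) * (∫⁻ y, ρ y ^ (6 / 5 : ℝ)) ^ (2 / 3 : ℝ)) := by
  obtain ⟨c₁, hc₁, h₁⟩ := near_kernel
  obtain ⟨c₂, hc₂, h₂⟩ := far_kernel
  -- `cᵢ + 1` replaces `cᵢ` to make the constants visibly nonzero
  refine ⟨2 * ((c₁ + 1) ^ (1 / 5 : ℝ) * ((c₂ + 1) ^ (1 / 6 : ℝ)) ^ (4 / 5 : ℝ)), ?_, fun ρ hρ b x => ?_⟩
  · refine ENNReal.mul_ne_top (by simp) (ENNReal.mul_ne_top ?_ ?_)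
    · exact ENNReal.rpow_ne_top_of_nonneg (by norm_num) (by simp [hc₁])
    · exact ENNReal.rpow_ne_top_of_nonneg (by norm_num)
        (ENNReal.rpow_ne_top_of_nonneg (by norm_num) (by simp [hc₂]))
  set N := ∫⁻ y, ρ y ^ (6 / 5 : ℝ) with hN
  have key := optimize_radius (X := ∫⁻ y, (if ρ y ≤ b then ρ y * ENNReal.ofReal ‖x - y‖⁻¹ else 0))
    (A := (c₁ + 1) * b) (B := (c₂ + 1) ^ (1 / 6 : ℝ) * N ^ (5 / 6 : ℝ)) (α := 2) (β := 1 / 2)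
    (by norm_num) (by norm_num) ?_ ?_ ?_
  · refine key.trans (le_of_eq ?_)
    rw [ENNReal.mul_rpow_of_nonneg _ _ (by norm_num), ENNReal.mul_rpow_of_nonneg _ _ (by norm_num),
      ← ENNReal.rpow_mul N]
    norm_num
    ring
  · intro h
    have hb : b = 0 := by simpa using h
    have h0 : ∀ y, (if ρ y ≤ b then ρ y * ENNReal.ofReal ‖x - y‖⁻¹ else 0) = 0 := by
      intro y
      split_ifs with hy
      · rw [hb, nonpos_iff_eq_zero] at hy
        simp [hy]
      · rfl
    simp [h0]
  · intro h
    have hN0 : N = 0 := by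
      rcases mul_eq_zero.1 h with h | h
      · rw [ENNReal.rpow_eq_zero_iff_of_pos (by norm_num)] at h
        simp at h
      · rwa [ENNReal.rpow_eq_zero_iff_of_pos (by norm_num)] at h
    rw [hN, lintegral_eq_zero_iff (by fun_prop)] at hN0
    rw [← lintegral_zero (μ := (volume : Measure V3))]
    refine lintegral_congr_ae ?_
    filter_upwards [hN0] with y hy
    have : ρ y = 0 := by
      have : ρ y ^ (6 / 5 : ℝ) = 0 := hy
      rwa [ENNReal.rpow_eq_zero_iff_of_pos (by norm_num)] at this
    simp [this]
  · intro R hR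
    have hmφ : Measurable fun z : V3 => (if ‖z‖ < R then ENNReal.ofReal ‖z‖⁻¹ else 0) :=
      Measurable.ite (measurableSet_lt (by fun_prop) (by fun_prop)) (by fun_prop) (by fun_prop)
    have hmψ : Measurable fun z : V3 => (if ‖z‖ < R then 0 else ENNReal.ofReal ‖z‖⁻¹) :=
      Measurable.ite (measurableSet_lt (by fun_prop) (by fun_prop)) (by fun_prop) (by fun_prop)
    calc ∫⁻ y, (if ρ y ≤ b then ρ y * ENNReal.ofReal ‖x - y‖⁻¹ else 0)
        ≤ ∫⁻ y, (b * (if ‖x - y‖ < R then ENNReal.ofReal ‖x - y‖⁻¹ else 0)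
            + ρ y * (if ‖x - y‖ < R then 0 else ENNReal.ofReal ‖x - y‖⁻¹)) := by
          refine lintegral_mono fun y => ?_
          dsimp only
          split_ifs with h1 h2
          · simp; gcongr
          · simp
          · simp
          · simp
      _ = b * (∫⁻ y, (if ‖x - y‖ < R then ENNReal.ofReal ‖x - y‖⁻¹ else 0))
            + ∫⁻ y, ρ y * (if ‖x - y‖ < R then 0 else ENNReal.ofReal ‖x - y‖⁻¹) := by
          have hm : Measurable fun y : V3 =>
              (if ‖x - y‖ < R then ENNReal.ofReal ‖x - y‖⁻¹ else 0) :=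
            hmφ.comp (measurable_const.sub measurable_id)
          rw [lintegral_add_left (hm.const_mul b), lintegral_const_mul _ hm]
      _ ≤ b * (c₁ * ENNReal.ofReal (R ^ (2 : ℝ)))
            + N ^ (5 / 6 : ℝ) * (c₂ * ENNReal.ofReal (R ^ (-3 : ℝ))) ^ (1 / 6 : ℝ) := by
          gcongr
          · rw [lintegral_sub_left_eq_self
              (fun z : V3 => (if ‖z‖ < R then ENNReal.ofReal ‖z‖⁻¹ else 0)) x, h₁ R hR]
          · have := ENNReal.lintegral_mul_le_Lp_mul_Lq (volume : Measure V3) (p := 6 / 5) (q := 6)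
              (by constructor <;> norm_num) hρ.aemeasurable
              (hmψ.comp (measurable_const.sub measurable_id : Measurable fun y => x - y)).aemeasurable
            refine this.trans ?_
            simp only [Function.comp_apply, Pi.sub_apply]
            rw [lintegral_sub_left_eq_self
              (fun z : V3 => (if ‖z‖ < R then 0 else ENNReal.ofReal ‖z‖⁻¹) ^ (6 : ℝ)) x, h₂ R hR]
            norm_num [hN]
      _ ≤ _ := by
          rw [ENNReal.mul_rpow_of_nonneg _ _ (by norm_num),
            ENNReal.ofReal_rpow_of_nonneg (by positivity) (by norm_num), ← Real.rpow_mul hR.le]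
          have e : (-3 : ℝ) * (1 / 6) = -(1 / 2) := by norm_num
          rw [e, ← mul_assoc, ← mul_assoc, mul_comm b, mul_comm (N ^ (5 / 6 : ℝ))]
          gcongr <;> simp

/-- The diagonal Hardy–Littlewood–Sobolev inequality for the Newtonian kernel,
`∬ ρ(x) ρ(y) |x-y|⁻¹ ≤ c ‖ρ‖_{6/5}²`. By symmetry it suffices to integrate over the pairs with
`ρ(y) ≤ ρ(x)`, and there `sublevel_potential` at level `b = ρ(x)` bounds the inner integral. -/
lemma newton_hls : ∃ c : ℝ≥0∞, c ≠ ⊤ ∧ ∀ ρ : V3 → ℝ≥0∞, Measurable ρ →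
    ∫⁻ x, ∫⁻ y, ρ x * ρ y * ENNReal.ofReal ‖x - y‖⁻¹
      ≤ c * (∫⁻ y, ρ y ^ (6 / 5 : ℝ)) ^ (5 / 3 : ℝ) := by
  obtain ⟨c, hc, h⟩ := sublevel_potential
  refine ⟨2 * c, ENNReal.mul_ne_top (by simp) hc, fun ρ hρ => ?_⟩
  set N := ∫⁻ y, ρ y ^ (6 / 5 : ℝ) with hN
  set Φ : V3 → V3 → ℝ≥0∞ := fun x y =>
    ρ x * (if ρ y ≤ ρ x then ρ y * ENNReal.ofReal ‖x - y‖⁻¹ else 0) with hΦ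
  have hΦm : Measurable (Function.uncurry Φ) := by
    refine (hρ.comp measurable_fst).mul (Measurable.ite ?_ ?_ measurable_const)
    · exact measurableSet_le (hρ.comp measurable_snd) (hρ.comp measurable_fst)
    · exact (hρ.comp measurable_snd).mul (by fun_prop)
  have hmain : ∫⁻ x, ∫⁻ y, Φ x y ≤ c * N ^ (5 / 3 : ℝ) := by
    calc ∫⁻ x, ∫⁻ y, Φ x y ≤ ∫⁻ x, c * N ^ (2 / 3 : ℝ) * ρ x ^ (6 / 5 : ℝ) := by
          refine lintegral_mono fun x => ?_
          have hm : Measurable fun y => (if ρ y ≤ ρ x then ρ y * ENNReal.ofReal ‖x - y‖⁻¹ else 0) :=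
            Measurable.ite (measurableSet_le hρ measurable_const) (by fun_prop) measurable_const
          simp only [hΦ]
          rw [lintegral_const_mul _ hm]
          refine (mul_le_mul_right (h ρ hρ (ρ x) x) _).trans (le_of_eq ?_)
          have : (6 / 5 : ℝ) = 1 + 1 / 5 := by norm_num
          rw [this, ENNReal.rpow_add_of_nonneg _ _ (by norm_num) (by norm_num), ENNReal.rpow_one, ← this]
          ring
      _ = c * N ^ (5 / 3 : ℝ) := by
          rw [lintegral_const_mul _ (by fun_prop), ← hN]
          have : (5 / 3 : ℝ) = 2 / 3 + 1 := by norm_num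
          rw [this, ENNReal.rpow_add_of_nonneg _ _ (by norm_num) (by norm_num), ENNReal.rpow_one]
          ring
  calc ∫⁻ x, ∫⁻ y, ρ x * ρ y * ENNReal.ofReal ‖x - y‖⁻¹
      ≤ ∫⁻ x, ∫⁻ y, (Φ x y + Φ y x) := by
        refine lintegral_mono fun x => lintegral_mono fun y => ?_
        simp only [hΦ]
        rcases le_total (ρ y) (ρ x) with hxy | hxy
        · rw [if_pos hxy]
          refine le_trans (le_of_eq ?_) le_self_add
          ring
        · rw [if_pos hxy]
          refine le_trans (le_of_eq ?_) le_add_self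
          rw [norm_sub_rev]
          ring
    _ = (∫⁻ x, ∫⁻ y, Φ x y) + ∫⁻ x, ∫⁻ y, Φ y x := by
        have hm : Measurable fun x => ∫⁻ y, Φ x y := hΦm.lintegral_prod_right'
        rw [← lintegral_add_left hm]
        refine lintegral_congr fun x => ?_
        exact lintegral_add_left (hΦm.comp measurable_prodMk_left) _
    _ = 2 * ∫⁻ x, ∫⁻ y, Φ x y := by
        rw [lintegral_lintegral_swap (f := fun x y => Φ y x)
          (hΦm.comp measurable_swap).aemeasurable, two_mul]
    _ ≤ 2 * c * N ^ (5 / 3 : ℝ) := by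
        rw [mul_assoc]; gcongr

/-! ### Interpolation of the spatial density -/

lemma expo_ne_zero {k : ℝ} (hk : 0 ≤ k) : expo k ≠ 0 := by
  unfold expo
  split_ifs
  · simp
  · simp only [ne_eq, ENNReal.ofReal_eq_zero, not_le]; positivity

lemma one_le_expo {k : ℝ} (hk : 0 ≤ k) : 1 ≤ expo k := by
  unfold expo
  split_ifs
  · simp
  · rw [ENNReal.one_le_ofReal]
    have : 0 ≤ 1 / k := by positivity
    linarith

lemma one_div_expo_toReal {k : ℝ} (hk : 0 ≤ k) : 1 / (expo k).toReal = k / (k + 1) := by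
  unfold expo
  split_ifs with h
  · simp [h]
  · rw [ENNReal.toReal_ofReal (by positivity)]
    field_simp

/-- Interpolation in the momentum variable,
`∫ h ≤ c ‖h‖_{1+1/k}^{2(k+1)/(2k+5)} (∫ |p|² h)^{3/(2k+5)}`: Hölder's inequality on `|p| < R`,
the second moment on `|p| ≥ R`, and the optimal `R`. -/
lemma density_interpolation {k : ℝ} (hk : 0 ≤ k) : ∃ c : ℝ≥0∞, c ≠ ⊤ ∧
    ∀ h : V3 → ℝ, Measurable h → (∀ p, 0 ≤ h p) →
      ∫⁻ p, ENNReal.ofReal (h p)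
        ≤ c * (eLpNorm h (expo k) volume ^ (2 * (k + 1) / (2 * k + 5))
          * (∫⁻ p, ENNReal.ofReal (‖p‖ ^ 2 * h p)) ^ (3 / (2 * k + 5))) := by
  set v : ℝ≥0∞ := volume (Metric.ball (0 : V3) 1) ^ (1 / (k + 1)) with hv
  have hvt : v ≠ ⊤ := ENNReal.rpow_ne_top_of_nonneg (by positivity) measure_ball_lt_top.ne
  -- `v + 1` replaces `v` to make the constant visibly nonzero
  refine ⟨2 * (v + 1) ^ (2 * (k + 1) / (2 * k + 5)), ?_, fun h hm h0 => ?_⟩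
  · exact ENNReal.mul_ne_top (by simp) (ENNReal.rpow_ne_top_of_nonneg (by positivity) (by simp [hvt]))
  have key := optimize_radius (X := ∫⁻ p, ENNReal.ofReal (h p))
    (A := (v + 1) * eLpNorm h (expo k) volume) (B := ∫⁻ p, ENNReal.ofReal (‖p‖ ^ 2 * h p))
    (α := 3 / (k + 1)) (β := 2) (by positivity) (by norm_num) ?_ ?_ ?_
  · refine key.trans (le_of_eq ?_)
    have e1 : 2 / (3 / (k + 1) + 2) = 2 * (k + 1) / (2 * k + 5) := by field_simp; ring
    have e2 : 3 / (k + 1) / (3 / (k + 1) + 2) = 3 / (2 * k + 5) := by field_simp; ring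
    rw [e1, e2, ENNReal.mul_rpow_of_nonneg _ _ (by positivity)]
    ring
  · intro hA
    have : eLpNorm h (expo k) volume = 0 := by simpa using hA
    rw [eLpNorm_eq_zero_iff hm.aestronglyMeasurable (expo_ne_zero hk)] at this
    rw [lintegral_eq_zero_iff (by fun_prop)]
    filter_upwards [this] with p hp
    simp [hp]
  · intro hB
    rw [lintegral_eq_zero_iff (by fun_prop)] at hB
    rw [lintegral_eq_zero_iff (by fun_prop)]
    have hz : ∀ᵐ p : V3, p ≠ 0 := by simp [ae_iff]
    filter_upwards [hB, hz] with p hp hp0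
    have hp1 : ENNReal.ofReal (‖p‖ ^ 2 * h p) = 0 := hp
    rw [ENNReal.ofReal_eq_zero] at hp1
    have : 0 < ‖p‖ ^ 2 := by positivity
    simp only [Pi.zero_apply, ENNReal.ofReal_eq_zero]
    exact nonpos_of_mul_nonpos_right hp1 this
  · intro R hR
    rw [← lintegral_add_compl _ (measurableSet_ball (x := (0 : V3)) (ε := R))]
    gcongr
    · have e : ∫⁻ p in Metric.ball (0 : V3) R, ENNReal.ofReal (h p)
          = eLpNorm h 1 (volume.restrict (Metric.ball (0 : V3) R)) := by
        rw [eLpNorm_one_eq_lintegral_enorm]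
        exact lintegral_congr fun p => (Real.enorm_of_nonneg (h0 p)).symm
      rw [e]
      refine (eLpNorm_le_eLpNorm_mul_rpow_measure_univ (one_le_expo hk)
        hm.aestronglyMeasurable).trans ?_
      have e1 : 1 / (1 : ℝ≥0∞).toReal - 1 / (expo k).toReal = 1 / (k + 1) := by
        rw [one_div_expo_toReal hk]; simp; field_simp; ring
      rw [e1, Measure.restrict_apply_univ, Measure.addHaar_ball _ _ hR.le,
        ENNReal.mul_rpow_of_nonneg _ _ (by positivity), ← hv,
        ENNReal.ofReal_rpow_of_nonneg (by positivity) (by positivity), ← Real.rpow_natCast,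
        ← Real.rpow_mul hR.le]
      have e2 : ((Module.finrank ℝ V3 : ℕ) : ℝ) * (1 / (k + 1)) = 3 / (k + 1) := by
        simp [finrank_euclideanSpace]; ring
      rw [e2]
      calc _ ≤ eLpNorm h (expo k) volume * (ENNReal.ofReal (R ^ (3 / (k + 1))) * (v + 1)) := by
            gcongr
            · exact Measure.restrict_le_self
            · simp
        _ = _ := by ring
    · rw [mul_comm, ← lintegral_const_mul' _ _ ENNReal.ofReal_ne_top]
      refine (setLIntegral_mono' (measurableSet_ball.compl) fun p hp => ?_).trans
        (setLIntegral_le_lintegral _ _)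
      rw [← ENNReal.ofReal_mul (by positivity)]
      apply ENNReal.ofReal_le_ofReal
      have hp' : R ≤ ‖p‖ := by simpa using hp
      rw [Real.rpow_neg hR.le, ← mul_assoc]
      refine le_mul_of_one_le_left (h0 p) ?_
      rw [inv_mul_eq_div, one_le_div (by positivity)]
      norm_cast
      gcongr

lemma slice_norm_integral {k : ℝ} (hk : 0 < k) {f : V3 × V3 → ℝ} (hf : Measurable f) :
    (∫⁻ x, (∫⁻ p, ‖f (x, p)‖ₑ ^ (1 + 1 / k))) ^ (k / 5)
      = eLpNorm f (expo k) volume ^ ((k + 1) / 5) := by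
  have he : (expo k).toReal = 1 + 1 / k := by
    rw [expo, if_neg hk.ne', ENNReal.toReal_ofReal (by positivity)]
  have ht : expo k ≠ ⊤ := by simp [expo, hk.ne']
  rw [eLpNorm_eq_lintegral_rpow_enorm_toReal (expo_ne_zero hk.le) ht, he, ← ENNReal.rpow_mul,
    Measure.volume_eq_prod, lintegral_prod _ (by fun_prop)]
  congr 1
  field_simp

lemma slice_norm {k : ℝ} (hk : 0 < k) (h : V3 → ℝ) :
    eLpNorm h (expo k) volume ^ ((k + 1) / 5) = (∫⁻ p, ‖h p‖ₑ ^ (1 + 1 / k)) ^ (k / 5) := by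
  have he : (expo k).toReal = 1 + 1 / k := by
    rw [expo, if_neg hk.ne', ENNReal.toReal_ofReal (by positivity)]
  have ht : expo k ≠ ⊤ := by simp [expo, hk.ne']
  rw [eLpNorm_eq_lintegral_rpow_enorm_toReal (expo_ne_zero hk.le) ht, he, ← ENNReal.rpow_mul]
  congr 1
  field_simp

/-- A common form of the `x`-dependent factor `‖f(x,·)‖_{1+1/k}^{(k+1)/5}` for all `k ≥ 0`. For
`k > 0` it is `F(x)^{k/5}` with `F(x) = ∫ f(x,p)^{1+1/k} dp`; for `k = 0` it is bounded, for almost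
every `x`, by the constant `‖f‖_∞^{1/5}`. -/
lemma exists_slice_factor {k : ℝ} (hk : 0 ≤ k) {f : V3 × V3 → ℝ} (hf : Measurable f) :
    ∃ (K : ℝ≥0∞) (F : V3 → ℝ≥0∞), Measurable F ∧
      (∀ᵐ x, eLpNorm (fun p => f (x, p)) (expo k) volume ^ ((k + 1) / 5) ≤ K * F x ^ (k / 5)) ∧
      K * (∫⁻ x, F x) ^ (k / 5) = eLpNorm f (expo k) volume ^ ((k + 1) / 5) := by
  rcases hk.eq_or_lt with rfl | hk
  · refine ⟨eLpNorm f ⊤ volume ^ ((1 : ℝ) / 5), fun _ => 1, measurable_const, ?_, by simp [expo]⟩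
    have h : ∀ᵐ z : V3 × V3 ∂(volume.prod volume), ‖f z‖ₑ ≤ eLpNormEssSup f volume :=
      ae_le_eLpNormEssSup
    filter_upwards [Measure.ae_ae_of_ae_prod h] with x hx
    simp only [expo, if_true, eLpNorm_exponent_top, zero_add, zero_div, ENNReal.rpow_zero, mul_one]
    gcongr
    exact essSup_le_of_ae_le _ hx
  · refine ⟨1, fun x => ∫⁻ p, ‖f (x, p)‖ₑ ^ (1 + 1 / k), ?_, ?_, ?_⟩
    · exact Measurable.lintegral_prod_right' (f := fun z : V3 × V3 => ‖f z‖ₑ ^ (1 + 1 / k)) (by fun_prop)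
    · exact ae_of_all _ fun x => by rw [one_mul, slice_norm hk]
    · rw [one_mul, slice_norm_integral hk hf]

/-- The bound `∫ ρ^{6/5} ≤ c ‖f‖₁^{(7-2k)/10} ‖f‖_{1+1/k}^{(k+1)/5} (∬ |p|² f)^{3/10}`. The
pointwise interpolation is raised to the power `(2k+5)/10` and multiplied by `ρ^{(7-2k)/10}`; the
result is integrated with Hölder's inequality with weights `(7-2k)/10`, `k/5`, `3/10`, whose sum
is `1`. -/
lemma density_L65 {k : ℝ} (hk : 0 ≤ k) (hk' : k ≤ 7 / 2) : ∃ c : ℝ≥0∞, c ≠ ⊤ ∧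
    ∀ f : V3 × V3 → ℝ, Measurable f → (∀ z, 0 ≤ f z) →
      ∫⁻ x : V3, (∫⁻ p : V3, ENNReal.ofReal (f (x, p))) ^ (6 / 5 : ℝ)
        ≤ c * (eLpNorm f 1 volume ^ ((7 - 2 * k) / 10)
          * eLpNorm f (expo k) volume ^ ((k + 1) / 5)
          * (∫⁻ z : V3 × V3, ENNReal.ofReal (‖z.2‖ ^ 2 * f z)) ^ (3 / 10 : ℝ)) := by
  obtain ⟨c, hc, hint⟩ := density_interpolation hk
  refine ⟨c ^ ((2 * k + 5) / 10), ENNReal.rpow_ne_top_of_nonneg (by positivity) hc,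
    fun f hf h0 => ?_⟩
  obtain ⟨K, F, hFm, hF, hKF⟩ := exists_slice_factor hk hf
  set ρ : V3 → ℝ≥0∞ := fun x => ∫⁻ p : V3, ENNReal.ofReal (f (x, p)) with hρ
  set E : V3 → ℝ≥0∞ := fun x => ∫⁻ p : V3, ENNReal.ofReal (‖p‖ ^ 2 * f (x, p)) with hE
  have hρm : Measurable ρ :=
    Measurable.lintegral_prod_right' (f := fun z : V3 × V3 => ENNReal.ofReal (f z)) (by fun_prop)
  have hEm : Measurable E :=
    Measurable.lintegral_prod_right'
      (f := fun z : V3 × V3 => ENNReal.ofReal (‖z.2‖ ^ 2 * f z)) (by fun_prop)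
  have hρI : ∫⁻ x, ρ x = eLpNorm f 1 volume := by
    rw [eLpNorm_one_eq_lintegral_enorm, Measure.volume_eq_prod, lintegral_prod _ (by fun_prop)]
    exact lintegral_congr fun x => lintegral_congr fun p => (Real.enorm_of_nonneg (h0 _)).symm
  have hEI : ∫⁻ x, E x = ∫⁻ z : V3 × V3, ENNReal.ofReal (‖z.2‖ ^ 2 * f z) := by
    rw [Measure.volume_eq_prod, lintegral_prod _ (by fun_prop)]
  have ha : 0 ≤ (7 - 2 * k) / 10 := by linarith
  have hpt : ∀ᵐ x, ρ x ^ (6 / 5 : ℝ) ≤ c ^ ((2 * k + 5) / 10) * K *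
      (ρ x ^ ((7 - 2 * k) / 10) * F x ^ (k / 5) * E x ^ (3 / 10 : ℝ)) := by
    filter_upwards [hF] with x hx
    have h1 := hint (fun p => f (x, p)) (by fun_prop) (fun p => h0 _)
    have h2 := ENNReal.rpow_le_rpow h1 (z := (2 * k + 5) / 10) (by positivity)
    rw [ENNReal.mul_rpow_of_nonneg _ _ (by positivity),
      ENNReal.mul_rpow_of_nonneg _ _ (by positivity), ← ENNReal.rpow_mul, ← ENNReal.rpow_mul] at h2
    have e1 : 2 * (k + 1) / (2 * k + 5) * ((2 * k + 5) / 10) = (k + 1) / 5 := by field_simp; norm_num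
    have e2 : 3 / (2 * k + 5) * ((2 * k + 5) / 10) = 3 / 10 := by field_simp
    rw [e1, e2] at h2
    have e3 : (6 / 5 : ℝ) = (7 - 2 * k) / 10 + (2 * k + 5) / 10 := by ring
    rw [e3, ENNReal.rpow_add_of_nonneg _ _ ha (by positivity)]
    calc _ ≤ ρ x ^ ((7 - 2 * k) / 10) * (c ^ ((2 * k + 5) / 10) *
            ((K * F x ^ (k / 5)) * E x ^ (3 / 10 : ℝ))) := by
          gcongr
          exact h2.trans (by gcongr)
      _ = _ := by ring
  have hhol : ∫⁻ x, ρ x ^ ((7 - 2 * k) / 10) * F x ^ (k / 5) * E x ^ (3 / 10 : ℝ)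
      ≤ (∫⁻ x, ρ x) ^ ((7 - 2 * k) / 10) * (∫⁻ x, F x) ^ (k / 5) * (∫⁻ x, E x) ^ (3 / 10 : ℝ) := by
    have := ENNReal.lintegral_prod_norm_pow_le (μ := (volume : Measure V3)) Finset.univ
      (f := ![ρ, F, E]) (p := ![(7 - 2 * k) / 10, k / 5, 3 / 10])
      (by intro i _; fin_cases i <;> simp <;> fun_prop)
      (by simp [Fin.sum_univ_three]; ring)
      (by intro i _; fin_cases i <;> simp <;> linarith)
    simpa [Fin.prod_univ_three] using this
  calc ∫⁻ x, ρ x ^ (6 / 5 : ℝ)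
      ≤ ∫⁻ x, c ^ ((2 * k + 5) / 10) * K *
        (ρ x ^ ((7 - 2 * k) / 10) * F x ^ (k / 5) * E x ^ (3 / 10 : ℝ)) := lintegral_mono_ae hpt
    _ = c ^ ((2 * k + 5) / 10) * K *
        ∫⁻ x, ρ x ^ ((7 - 2 * k) / 10) * F x ^ (k / 5) * E x ^ (3 / 10 : ℝ) :=
        lintegral_const_mul _ (by fun_prop)
    _ ≤ c ^ ((2 * k + 5) / 10) * K * ((∫⁻ x, ρ x) ^ ((7 - 2 * k) / 10) * (∫⁻ x, F x) ^ (k / 5)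
          * (∫⁻ x, E x) ^ (3 / 10 : ℝ)) := by gcongr
    _ = _ := by rw [hρI, hEI, ← hKF]; ring

/-- Only an inequality: the Bochner integral `spatialDensity f x` is `0` where `f(x,·)` is not
integrable, while the lower Lebesgue integral is then `∞`. -/
lemma ofReal_spatialDensity_le {f : V3 × V3 → ℝ} (hf : Measurable f) (h0 : ∀ z, 0 ≤ f z) (x : V3) :
    ENNReal.ofReal (spatialDensity f x) ≤ ∫⁻ p : V3, ENNReal.ofReal (f (x, p)) := by
  rw [spatialDensity, integral_eq_lintegral_of_nonneg_ae (ae_of_all _ fun p => h0 _)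
    (hf.comp measurable_prodMk_left).aestronglyMeasurable]
  exact ENNReal.ofReal_toReal_le

/-! ### The potential energy estimate -/

/-- **Key potential-energy estimate for (VP).**  For `0 ≤ k ≤ 7/2` there is `C > 0`
depending only on `k` such that for every nonnegative measurable phase-space density `f`,
`(1/2) ∬ ρ_f(x) ρ_f(y) |x−y|⁻¹ dx dy
  ≤ C ‖f‖₁^{(7−2k)/6} ‖f‖_{1+1/k}^{(k+1)/3} E_kin(f)^{1/2}`,
where `E_kin(f) = (1/2) ∬ |p|² f dp dx`. -/
theorem stmt_1 (k : ℝ) (hk : 0 ≤ k) (hk' : k ≤ 7 / 2) :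
    ∃ C : ℝ, 0 < C ∧
      ∀ f : V3 × V3 → ℝ, Measurable f → (∀ z, 0 ≤ f z) →
        (1 / 2 : ℝ≥0∞) * ∫⁻ x : V3, ∫⁻ y : V3,
            ENNReal.ofReal (spatialDensity f x * spatialDensity f y / ‖x - y‖)
          ≤ ENNReal.ofReal C
            * eLpNorm f 1 volume ^ ((7 - 2 * k) / 6)
            * eLpNorm f (expo k) volume ^ ((k + 1) / 3)
            * ((1 / 2 : ℝ≥0∞) * ∫⁻ z : V3 × V3, ENNReal.ofReal (‖z.2‖ ^ 2 * f z))
                ^ ((1 : ℝ) / 2) := by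
  obtain ⟨c₁, hc₁, hls⟩ := newton_hls
  obtain ⟨c₂, hc₂, hL⟩ := density_L65 hk hk'
  set D : ℝ≥0∞ := 1 / 2 * (c₁ * c₂ ^ (5 / 3 : ℝ) * 2 ^ (1 / 2 : ℝ)) with hD
  have hDt : D ≠ ⊤ := by
    refine ENNReal.mul_ne_top (by simp) (ENNReal.mul_ne_top (ENNReal.mul_ne_top hc₁ ?_) ?_)
    · exact ENNReal.rpow_ne_top_of_nonneg (by norm_num) hc₂
    · exact ENNReal.rpow_ne_top_of_nonneg (by norm_num) (by simp)
  refine ⟨D.toReal + 1, by positivity, fun f hf h0 => ?_⟩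
  have hDC : D ≤ ENNReal.ofReal (D.toReal + 1) :=
    (ENNReal.le_ofReal_iff_toReal_le hDt (by positivity)).2 (by linarith)
  set ρ : V3 → ℝ≥0∞ := fun x => ∫⁻ p : V3, ENNReal.ofReal (f (x, p)) with hρ
  have hρm : Measurable ρ :=
    Measurable.lintegral_prod_right' (f := fun z : V3 × V3 => ENNReal.ofReal (f z)) (by fun_prop)
  have hs0 : ∀ x, 0 ≤ spatialDensity f x := fun x => integral_nonneg fun p => h0 _
  set T := ∫⁻ z : V3 × V3, ENNReal.ofReal (‖z.2‖ ^ 2 * f z) with hT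
  -- the factor `1 / 2` in the kinetic energy is traded for the factor `√2` in the constant
  have hT2 : T ^ (1 / 2 : ℝ) = 2 ^ (1 / 2 : ℝ) * ((1 / 2 : ℝ≥0∞) * T) ^ (1 / 2 : ℝ) := by
    have h2 : (2 : ℝ≥0∞) * (1 / 2) = 1 := by
      rw [one_div]; exact ENNReal.mul_inv_cancel (by simp) (by simp)
    rw [← ENNReal.mul_rpow_of_nonneg _ _ (by norm_num), ← mul_assoc, h2, one_mul]
  calc (1 / 2 : ℝ≥0∞) * ∫⁻ x : V3, ∫⁻ y : V3,
          ENNReal.ofReal (spatialDensity f x * spatialDensity f y / ‖x - y‖)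
      ≤ 1 / 2 * ∫⁻ x, ∫⁻ y, ρ x * ρ y * ENNReal.ofReal ‖x - y‖⁻¹ := by
        gcongr with x y
        rw [div_eq_mul_inv, ENNReal.ofReal_mul (mul_nonneg (hs0 x) (hs0 y)),
          ENNReal.ofReal_mul (hs0 x)]
        gcongr
        · exact ofReal_spatialDensity_le hf h0 x
        · exact ofReal_spatialDensity_le hf h0 y
    _ ≤ 1 / 2 * (c₁ * (c₂ * (eLpNorm f 1 volume ^ ((7 - 2 * k) / 10)
          * eLpNorm f (expo k) volume ^ ((k + 1) / 5) * T ^ (3 / 10 : ℝ))) ^ (5 / 3 : ℝ)) := by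
        gcongr
        refine (hls ρ hρm).trans ?_
        gcongr
        exact hL f hf h0
    _ = D * eLpNorm f 1 volume ^ ((7 - 2 * k) / 6)
          * eLpNorm f (expo k) volume ^ ((k + 1) / 3) * ((1 / 2 : ℝ≥0∞) * T) ^ (1 / 2 : ℝ) := by
        have h53 : (0 : ℝ) ≤ 5 / 3 := by norm_num
        rw [ENNReal.mul_rpow_of_nonneg _ _ h53, ENNReal.mul_rpow_of_nonneg _ _ h53,
          ENNReal.mul_rpow_of_nonneg _ _ h53, ← ENNReal.rpow_mul, ← ENNReal.rpow_mul,
          ← ENNReal.rpow_mul]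
        have i1 : (7 - 2 * k) / 10 * (5 / 3) = (7 - 2 * k) / 6 := by ring
        have i2 : (k + 1) / 5 * (5 / 3) = (k + 1) / 3 := by ring
        have i3 : (3 / 10 : ℝ) * (5 / 3) = 1 / 2 := by norm_num
        rw [i1, i2, i3, hT2, hD]
        ring
    _ ≤ _ := by gcongr
end
end
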